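/- Let v be quasi-definite with SMOP (P_n) and associated first-kind polynomials (P^{(1)}_n), and let v̂ with (x−c)v̂ = v be quasi-definite with SMOP (P̂_n) and associated first-kind polynomials (P̂^{(1)}_n), defined from the recurrence coefficients of (P̂_n). Let v^α be a linear functional whose SMOP is the co-recursive sequence S_n(x) = P_n(x) + (v_0/v̂_0)·P^{(1)}_{n−1}(x). Then the sequence (P̂^{(1)}_n)_{n≥0} is orthogonal with respect to the Christoffel transformation (x−c)v^α: ⟨(x−c)v^α, P̂^{(1)}_n·P̂^{(1)}_m⟩ = 0 for n ≠ m and ⟨(x−c)v^α, (P̂^{(1)}_n)²⟩ ≠ 0 for all n. In other words, v̂^{(1)} = (x−c)v^α up to normalization. -/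

import Mathlib

open Polynomial

noncomputable section

/-- Apply a linear functional (identified with its moment sequence) to a polynomial:
`⟨u, p⟩ = Σ_k c_k u_k` for `p = Σ_k c_k x^k`. -/
def fapply (u : ℕ → ℂ) (p : Polynomial ℂ) : ℂ := p.sum fun k ck => ck * u k

/-- `P` is the sequence of monic orthogonal polynomials (SMOP) of the functional `u`. -/
def IsSMOP (u : ℕ → ℂ) (P : ℕ → Polynomial ℂ) : Prop :=
  (∀ n, (P n).Monic) ∧ (∀ n, (P n).natDegree = n) ∧
    (∀ n m, n ≠ m → fapply u (P n * P m) = 0) ∧ (∀ n, fapply u (P n * P n) ≠ 0)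

/-- A functional is quasi-definite iff it admits a SMOP. -/
def IsQuasiDefinite (u : ℕ → ℂ) : Prop := ∃ P, IsSMOP u P

/-- Three term recurrence relation `x P_n = P_{n+1} + b_n P_n + a_n P_{n-1}`,
with `P_{-1} = 0`, `P_0 = 1`. -/
def HasTTRR (P : ℕ → Polynomial ℂ) (a b : ℕ → ℂ) : Prop :=
  P 0 = 1 ∧ X * P 0 = P 1 + C (b 0) * P 0 ∧
    ∀ n, 1 ≤ n → X * P n = P (n + 1) + C (b n) * P n + C (a n) * P (n - 1)

/-- Wronskian `W(p,q)(x) = p(x) q'(x) - p'(x) q(x)`. -/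
def Wr (p q : Polynomial ℂ) (x : ℂ) : ℂ :=
  p.eval x * (derivative q).eval x - (derivative p).eval x * q.eval x

/-- The monic Jacobi matrix with diagonal `b`, superdiagonal `1` and subdiagonal
entries `J_{n+1,n} = a_{n+1}`. -/
def jacobi (a b : ℕ → ℂ) (i j : ℕ) : ℂ :=
  if i = j then b i else if j = i + 1 then 1 else if i = j + 1 then a i else 0

/-- Entrywise product of semi-infinite (banded) matrices; the sum has finite support. -/
def mprod (A B : ℕ → ℕ → ℂ) (i j : ℕ) : ℂ := ∑' k, A i k * B k j

/-- `w` is the moment sequence of the inverse functional `u⁻¹`: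
the convolution of the moments of `u` and `w` is `(1,0,0,…)`. -/
def IsInverseMoments (u w : ℕ → ℂ) : Prop :=
  ∀ n, ∑ k ∈ Finset.range (n + 1), u k * w (n - k) = if n = 0 then 1 else 0

/-- Apply a functional `u` to the second (outer) variable `y` of a bivariate polynomial
`D = Σ_k q_k(x) y^k`, giving `Σ_k u_k q_k(x)`. -/
def fapplyY (u : ℕ → ℂ) (D : Polynomial (Polynomial ℂ)) : Polynomial ℂ :=
  D.sum fun k q => u k • q

/-- `P^{(1)}_{n-1}`, with the convention `P^{(1)}_{-1} = 0`. -/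
def P1prev (P1 : ℕ → Polynomial ℂ) (n : ℕ) : Polynomial ℂ :=
  if n = 0 then 0 else P1 (n - 1)

/-!
Write `D_L p (x) = ⟨L_y, (p(x) - p(y)) / (x - y)⟩`. If `L` annihilates every member of positive
degree of a recurrence sequence `P`, then `D_L P_{n+1} = L(1) P^{(1)}_n`, so identities for `D`
become identities between associated polynomials. Writing `y - c = (x - c) - (x - y)` under the
functional, one gets `(x - c) D_v̂ p = D_v p + v̂_0 p - ⟨v̂, p⟩` for `v = (x - c) v̂`. Orthogonality
gives `P̂_{n+1} = P_{n+1} + l_n P_n` with `l_n ≠ 0`, and inserting `p = P̂_{n+1}` yields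
`(x - c) P̂^{(1)}_n = S_{n+1} + l_n S_n`. This relation makes `P̂^{(1)}` orthogonal for
`(x - c) v^α`, the norm of `P̂^{(1)}_n` being `l_n ⟨v^α, S_n²⟩`.
-/

section LinearFunctional

variable {R : Type*} [CommRing R]

/-- The Christoffel transformation `(x - c)L` of a linear functional `L`. -/
def christoffel (c : R) (L : R[X] →ₗ[R] R) : R[X] →ₗ[R] R :=
  L ∘ₗ LinearMap.mulLeft R (X - C c)

@[simp]
theorem christoffel_apply (c : R) (L : R[X] →ₗ[R] R) (p : R[X]) :
    christoffel c L p = L ((X - C c) * p) :=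
  rfl

theorem linearFunctional_C_mul (L : R[X] →ₗ[R] R) (r : R) (p : R[X]) :
    L (C r * p) = r * L p := by
  rw [C_mul', map_smul, smul_eq_mul]

theorem linearFunctional_C (L : R[X] →ₗ[R] R) (r : R) : L (C r) = r * L 1 := by
  rw [← mul_one (C r), linearFunctional_C_mul]

/-- The map `p ↦ ⟨L_y, (p(x) - p(y)) / (x - y)⟩`, which produces the associated polynomials of the
first kind. It is defined on monomials by
`(xⁿ - yⁿ) / (x - y) = ∑_{i < n} yⁱ x^(n-1-i)`. -/
def dividedDifference (L : R[X] →ₗ[R] R) : R[X] →ₗ[R] R[X] :=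
  lsum fun n => LinearMap.toSpanSingleton R R[X]
    (∑ i ∈ Finset.range n, C (L (X ^ i)) * X ^ (n - 1 - i))

namespace dividedDifference

variable (L : R[X] →ₗ[R] R)

theorem map_monomial (n : ℕ) (r : R) :
    dividedDifference L (monomial n r) =
      r • ∑ i ∈ Finset.range n, C (L (X ^ i)) * X ^ (n - 1 - i) := by
  simp [dividedDifference, sum_monomial_index]

@[simp]
theorem map_C (r : R) : dividedDifference L (C r) = 0 := by
  rw [← monomial_zero_left, map_monomial, Finset.range_zero, Finset.sum_empty, smul_zero]

theorem map_C_mul (r : R) (p : R[X]) :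
    dividedDifference L (C r * p) = C r * dividedDifference L p := by
  rw [C_mul', map_smul, C_mul']

theorem map_X_mul (p : R[X]) :
    dividedDifference L (X * p) = X * dividedDifference L p + C (L p) := by
  induction p using Polynomial.induction_on' with
  | add p q hp hq => simp only [mul_add, map_add, hp, hq]; ring
  | monomial n r =>
    have sum_succ : ∑ i ∈ Finset.range (n + 1), C (L (X ^ i)) * X ^ (n - i) =
        X * ∑ i ∈ Finset.range n, C (L (X ^ i)) * X ^ (n - 1 - i) + C (L (X ^ n)) := by
      rw [Finset.sum_range_succ, Nat.sub_self, pow_zero, mul_one, Finset.mul_sum]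
      congr 1
      refine Finset.sum_congr rfl fun i hi => ?_
      obtain ⟨k, rfl⟩ := Nat.exists_eq_add_of_lt (Finset.mem_range.1 hi)
      rw [show i + k + 1 - i = k + 1 by lia, show i + k + 1 - 1 - i = k by lia, pow_succ]
      ring
    rw [X_mul_monomial, map_monomial, map_monomial, Nat.add_sub_cancel, sum_succ, smul_add,
      mul_smul_comm, ← C_mul_X_pow_eq_monomial, linearFunctional_C_mul, C_mul, C_mul' r]

theorem X_sub_C_mul (c : R) (p : R[X]) :
    (X - C c) * dividedDifference L p =
      dividedDifference (christoffel c L) p + C (L 1) * p - C (L p) := by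
  induction p using Polynomial.induction_on with
  | C r =>
    rw [map_C, map_C, linearFunctional_C, C_mul]
    ring
  | add p q hp hq => simp only [map_add, mul_add, hp, hq]; ring
  | monomial n r h =>
    have christoffel_eq : christoffel c L (C r * X ^ n) =
        L (X * (C r * X ^ n)) - c * L (C r * X ^ n) := by
      rw [christoffel_apply, sub_mul, map_sub, linearFunctional_C_mul]
    rw [pow_succ', mul_left_comm, map_X_mul, map_X_mul, christoffel_eq, C_sub, C_mul]
    linear_combination X * h

end dividedDifference

/-- The monic polynomials generated by the three-term recurrence
`x P_n = P_{n+1} + b_n P_n + a_n P_{n-1}`, `P_{-1} = 0`, `P_0 = 1` (so `a 0` is never read).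
Shifting both coefficient sequences by one gives the associated polynomials of the first kind. -/
def recurrencePoly (a b : ℕ → R) : ℕ → R[X]
  | 0 => 1
  | 1 => X - C (b 0)
  | n + 2 => (X - C (b (n + 1))) * recurrencePoly a b (n + 1) - C (a (n + 1)) * recurrencePoly a b n

theorem dividedDifference_recurrencePoly_succ {L : R[X] →ₗ[R] R} {a b : ℕ → R}
    (hL : ∀ n, L (recurrencePoly a b (n + 1)) = 0) (n : ℕ) :
    dividedDifference L (recurrencePoly a b (n + 1)) =
      C (L 1) * recurrencePoly (fun k => a (k + 1)) (fun k => b (k + 1)) n := by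
  have recurrence (n : ℕ) : dividedDifference L (recurrencePoly a b (n + 2)) =
      (X - C (b (n + 1))) * dividedDifference L (recurrencePoly a b (n + 1)) -
        C (a (n + 1)) * dividedDifference L (recurrencePoly a b n) := by
    rw [recurrencePoly, map_sub, sub_mul, map_sub, dividedDifference.map_X_mul, hL,
      dividedDifference.map_C_mul, dividedDifference.map_C_mul, C_0]
    ring
  have base : dividedDifference L (recurrencePoly a b 1) = C (L 1) := by
    rw [recurrencePoly, map_sub, ← mul_one X, dividedDifference.map_X_mul, ← C_1,
      dividedDifference.map_C, dividedDifference.map_C]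
    ring
  induction n using Nat.twoStepInduction with
  | zero => rw [base, recurrencePoly, mul_one]
  | one =>
    rw [recurrence, base, recurrencePoly, ← C_1, dividedDifference.map_C, recurrencePoly]
    ring
  | more n ih₀ ih₁ =>
    rw [recurrence, ih₁, ih₀, recurrencePoly]
    ring

/-- `P` is the sequence of monic orthogonal polynomials of the linear functional `L`, over an
arbitrary commutative ring. -/
structure IsMonicOrthogonal (L : R[X] →ₗ[R] R) (P : ℕ → R[X]) : Prop where
  isMonicOfDegree (n : ℕ) : IsMonicOfDegree (P n) n
  apply_mul_eq_zero {m n : ℕ} (hmn : m ≠ n) : L (P m * P n) = 0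
  apply_mul_self_ne_zero (n : ℕ) : L (P n * P n) ≠ 0

namespace IsMonicOrthogonal

variable {L : R[X] →ₗ[R] R} {P : ℕ → R[X]}

theorem nontrivial (hP : IsMonicOrthogonal L P) : Nontrivial R :=
  ⟨_, _, hP.apply_mul_self_ne_zero 0⟩

theorem zero_eq_one (hP : IsMonicOrthogonal L P) : P 0 = 1 :=
  isMonicOfDegree_zero_iff.1 (hP.isMonicOfDegree 0)

theorem apply_one_ne_zero (hP : IsMonicOrthogonal L P) : L 1 ≠ 0 := by
  simpa only [hP.zero_eq_one, mul_one] using hP.apply_mul_self_ne_zero 0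

theorem apply_succ (hP : IsMonicOrthogonal L P) (n : ℕ) : L (P (n + 1)) = 0 := by
  simpa only [hP.zero_eq_one, mul_one] using hP.apply_mul_eq_zero n.succ_ne_zero

theorem apply_mul_eq_zero_of_degree_lt (hP : IsMonicOrthogonal L P) {n : ℕ} {q : R[X]}
    (hq : q.degree < n) : L (P n * q) = 0 := by
  have := hP.nontrivial
  let B : Polynomial.Sequence R :=
    ⟨P, fun i => by
      rw [degree_eq_natDegree (hP.isMonicOfDegree i).ne_zero, (hP.isMonicOfDegree i).natDegree_eq]⟩
  have span_eq : Submodule.span R (P '' Set.Iio n) = degreeLT R n :=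
    B.span_degreeLT fun i _ => (hP.isMonicOfDegree i).leadingCoeff_eq ▸ isUnit_one
  have span_le :
      Submodule.span R (P '' Set.Iio n) ≤ LinearMap.ker (L ∘ₗ LinearMap.mulLeft R (P n)) :=
    Submodule.span_le.2 <| Set.image_subset_iff.2 fun _ hi => hP.apply_mul_eq_zero (ne_of_gt hi)
  exact span_le (span_eq ▸ mem_degreeLT.2 hq)

theorem degree_sub_C_coeff_mul_lt (hP : IsMonicOrthogonal L P) {n : ℕ} {q : R[X]}
    (hq : q.natDegree ≤ n) : (q - C (q.coeff n) * P n).degree < n := by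
  have := hP.nontrivial
  obtain ⟨natDegree_le, coeff_eq_one⟩ := (isMonicOfDegree_iff _ n).1 (hP.isMonicOfDegree n)
  rw [degree_lt_iff_coeff_zero]
  intro m hm
  rcases hm.eq_or_lt with rfl | hm
  · rw [coeff_sub, coeff_C_mul, coeff_eq_one, mul_one, sub_self]
  · rw [coeff_sub, coeff_C_mul, coeff_eq_zero_of_natDegree_lt (hq.trans_lt hm),
      coeff_eq_zero_of_natDegree_lt (natDegree_le.trans_lt hm), mul_zero, sub_zero]

theorem apply_mul_eq_coeff_mul (hP : IsMonicOrthogonal L P) {n : ℕ} {q : R[X]}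
    (hq : q.natDegree ≤ n) : L (P n * q) = q.coeff n * L (P n * P n) := by
  have h := hP.apply_mul_eq_zero_of_degree_lt (hP.degree_sub_C_coeff_mul_lt hq)
  rwa [mul_sub, mul_left_comm, map_sub, linearFunctional_C_mul, sub_eq_zero] at h

theorem eq_C_coeff_mul_of_forall_lt [NoZeroDivisors R] (hP : IsMonicOrthogonal L P) {n : ℕ}
    {q : R[X]} (hq : q.natDegree ≤ n) (horth : ∀ k < n, L (P k * q) = 0) :
    q = C (q.coeff n) * P n := by
  set r := q - C (q.coeff n) * P n with hr
  by_contra hne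
  have r_ne_zero : r ≠ 0 := sub_ne_zero.2 hne
  have natDegree_lt : r.natDegree < n :=
    (natDegree_lt_iff_degree_lt r_ne_zero).2 (hP.degree_sub_C_coeff_mul_lt hq)
  have apply_eq_zero : L (P r.natDegree * r) = 0 := by
    nth_rw 2 [hr]
    rw [mul_sub, mul_left_comm, map_sub, linearFunctional_C_mul, horth _ natDegree_lt,
      hP.apply_mul_eq_zero natDegree_lt.ne, mul_zero, sub_zero]
  rw [hP.apply_mul_eq_coeff_mul le_rfl] at apply_eq_zero
  exact mul_ne_zero (leadingCoeff_ne_zero.2 r_ne_zero) (hP.apply_mul_self_ne_zero _) apply_eq_zero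

theorem christoffel_mul_succ (hP : IsMonicOrthogonal L P) (c : R) {n : ℕ} {q : R[X]}
    (hq : q.natDegree ≤ n) :
    christoffel c L (q * P (n + 1)) = q.coeff n * L (P (n + 1) * P (n + 1)) := by
  have natDegree_le : ((X - C c) * q).natDegree ≤ n + 1 := by
    rw [add_comm n 1]
    exact natDegree_mul_le_of_le (natDegree_X_sub_C_le c) hq
  have coeff_eq : ((X - C c) * q).coeff (n + 1) = q.coeff n := by
    rw [coeff_X_sub_C_mul, coeff_eq_zero_of_natDegree_lt (Nat.lt_succ_of_le hq), mul_zero,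
      sub_zero]
  rw [christoffel_apply, ← mul_assoc, mul_comm, hP.apply_mul_eq_coeff_mul natDegree_le, coeff_eq]

theorem exists_geronimus_eq_add [NoZeroDivisors R] {c : R} {Ph : ℕ → R[X]}
    (hP : IsMonicOrthogonal (christoffel c L) P) (hPh : IsMonicOrthogonal L Ph) (n : ℕ) :
    ∃ l ≠ 0, Ph (n + 1) = P (n + 1) + C l * P n := by
  have := hP.nontrivial
  have christoffel_sub {k : ℕ} (hk : k ≤ n) : christoffel c L (P k * (Ph (n + 1) - P (n + 1))) =
      (P k).coeff n * L (Ph (n + 1) * Ph (n + 1)) := by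
    rw [mul_sub, map_sub, hP.apply_mul_eq_zero (Nat.lt_succ_of_le hk).ne, sub_zero,
      hPh.christoffel_mul_succ c ((hP.isMonicOfDegree k).natDegree_eq.trans_le hk)]
  have natDegree_sub_le : (Ph (n + 1) - P (n + 1)).natDegree ≤ n :=
    Nat.lt_succ_iff.1 <|
      (hPh.isMonicOfDegree _).natDegree_sub_lt n.succ_ne_zero (hP.isMonicOfDegree _)
  have sub_eq := hP.eq_C_coeff_mul_of_forall_lt natDegree_sub_le fun k hk => by
    have natDegree_lt : (P k).natDegree < n := (hP.isMonicOfDegree k).natDegree_eq.trans_lt hk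
    rw [christoffel_sub hk.le, coeff_eq_zero_of_natDegree_lt natDegree_lt, zero_mul]
  refine ⟨_, fun coeff_eq_zero => hPh.apply_mul_self_ne_zero (n + 1) ?_, eq_add_of_sub_eq' sub_eq⟩
  have h := christoffel_sub (le_refl n)
  rw [sub_eq, coeff_eq_zero, C_0, zero_mul, mul_zero, map_zero,
    ((isMonicOfDegree_iff _ n).1 (hP.isMonicOfDegree n)).2, one_mul] at h
  exact h.symm

theorem christoffel_of_X_sub_C_mul_eq [NoZeroDivisors R] (hP : IsMonicOrthogonal L P) {c : R}
    {Q : ℕ → R[X]} {l : ℕ → R} (hl : ∀ n, l n ≠ 0)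
    (hQ : ∀ n, (X - C c) * Q n = P (n + 1) + C (l n) * P n) :
    IsMonicOrthogonal (christoffel c L) Q := by
  have := hP.nontrivial
  have isMonicOfDegree (n : ℕ) : IsMonicOfDegree (Q n) n := by
    refine .of_mul_left (m := 1) ⟨natDegree_X_sub_C c, monic_X_sub_C c⟩ ?_
    rw [hQ, add_comm 1 n]
    refine (hP.isMonicOfDegree _).add_right ((natDegree_C_mul_le _ _).trans_lt ?_)
    exact (hP.isMonicOfDegree n).natDegree_eq.trans_lt n.lt_succ_self
  have christoffel_mul {n : ℕ} {q : R[X]} (hq : q.natDegree ≤ n) :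
      christoffel c L (Q n * q) = l n * (q.coeff n * L (P n * P n)) := by
    have degree_lt : q.degree < (n + 1 : ℕ) :=
      (degree_le_of_natDegree_le hq).trans_lt (by exact_mod_cast n.lt_succ_self)
    rw [christoffel_apply, ← mul_assoc, hQ, add_mul, map_add, mul_assoc,
      linearFunctional_C_mul, hP.apply_mul_eq_zero_of_degree_lt degree_lt,
      hP.apply_mul_eq_coeff_mul hq, zero_add]
  have orth_of_lt {m n : ℕ} (hmn : m < n) : christoffel c L (Q n * Q m) = 0 := by
    have natDegree_lt : (Q m).natDegree < n := (isMonicOfDegree m).natDegree_eq.trans_lt hmn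
    rw [christoffel_mul natDegree_lt.le, coeff_eq_zero_of_natDegree_lt natDegree_lt, zero_mul,
      mul_zero]
  refine ⟨isMonicOfDegree, fun {m n} hmn => ?_, fun n => ?_⟩
  · rcases hmn.lt_or_gt with hlt | hlt
    · rw [mul_comm]
      exact orth_of_lt hlt
    · exact orth_of_lt hlt
  · obtain ⟨natDegree_le, coeff_eq_one⟩ := (isMonicOfDegree_iff _ n).1 (isMonicOfDegree n)
    rw [christoffel_mul natDegree_le, coeff_eq_one, one_mul]
    exact mul_ne_zero (hl n) (hP.apply_mul_self_ne_zero n)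

end IsMonicOrthogonal

theorem stmt_18_general [NoZeroDivisors R] {c α : R} {L M : R[X] →ₗ[R] R} {a b ah bh : ℕ → R}
    {S : ℕ → R[X]} (hP : IsMonicOrthogonal (christoffel c L) (recurrencePoly a b))
    (hPh : IsMonicOrthogonal L (recurrencePoly ah bh)) (hα : α * L 1 = christoffel c L 1)
    (hS : ∀ n, S (n + 1) = recurrencePoly a b (n + 1) +
      C α * recurrencePoly (fun k => a (k + 1)) (fun k => b (k + 1)) n)
    (hM : IsMonicOrthogonal M S) :
    IsMonicOrthogonal (christoffel c M)
      (recurrencePoly (fun k => ah (k + 1)) (fun k => bh (k + 1))) := by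
  choose l hl geronimus_eq using hP.exists_geronimus_eq_add hPh
  have C_mul_S (n : ℕ) : C (L 1) * S n =
      dividedDifference (christoffel c L) (recurrencePoly a b n) +
        C (L 1) * recurrencePoly a b n := by
    cases n with
    | zero => rw [hM.zero_eq_one, recurrencePoly, ← C_1, dividedDifference.map_C, zero_add]
    | succ n =>
      rw [hS, dividedDifference_recurrencePoly_succ hP.apply_succ, ← hα, C_mul]
      ring
  refine hM.christoffel_of_X_sub_C_mul_eq hl fun n =>
    mul_left_cancel₀ (C_ne_zero.2 hPh.apply_one_ne_zero) ?_
  have h := dividedDifference.X_sub_C_mul L c (recurrencePoly ah bh (n + 1))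
  rw [dividedDifference_recurrencePoly_succ hPh.apply_succ, hPh.apply_succ, geronimus_eq, map_add,
    dividedDifference.map_C_mul, C_0] at h
  linear_combination h - C_mul_S (n + 1) - C (l n) * C_mul_S n

/-- The linear functional on `R[X]` whose moments are `u n = ⟨u, xⁿ⟩`. -/
def momentFunctional (u : ℕ → R) : R[X] →ₗ[R] R :=
  lsum fun n => LinearMap.mulRight R (u n)

namespace momentFunctional

theorem apply_monomial (u : ℕ → R) (n : ℕ) (r : R) :
    momentFunctional u (monomial n r) = r * u n := by
  simp [momentFunctional, sum_monomial_index]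

theorem apply_one (u : ℕ → R) : momentFunctional u 1 = u 0 := by
  rw [← monomial_zero_one, apply_monomial, one_mul]

theorem eq_christoffel {u w : ℕ → R} {c : R} (h : ∀ n, w (n + 1) - c * w n = u n) :
    momentFunctional u = christoffel c (momentFunctional w) := by
  ext n
  simp only [LinearMap.comp_apply, christoffel_apply, sub_mul, map_sub, X_mul_monomial,
    C_mul_monomial, apply_monomial, ← h n]
  ring

end momentFunctional

end LinearFunctional

theorem isSMOP_iff_isMonicOrthogonal {u : ℕ → ℂ} {P : ℕ → ℂ[X]} :
    IsSMOP u P ↔ IsMonicOrthogonal (momentFunctional u) P :=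
  ⟨fun ⟨monic, natDegree_eq, orth, norm_ne⟩ =>
    ⟨fun n => ⟨natDegree_eq n, monic n⟩, fun hmn => orth _ _ hmn, norm_ne⟩,
  fun h => ⟨fun n => (h.isMonicOfDegree n).monic, fun n => (h.isMonicOfDegree n).natDegree_eq,
    fun _ _ hmn => h.apply_mul_eq_zero hmn, h.apply_mul_self_ne_zero⟩⟩

theorem HasTTRR.eq_recurrencePoly {P : ℕ → ℂ[X]} {a b : ℕ → ℂ} (h : HasTTRR P a b) :
    P = recurrencePoly a b := by
  obtain ⟨zero_eq, one_eq, succ_eq⟩ := h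
  funext n
  induction n using Nat.twoStepInduction with
  | zero => rw [zero_eq, recurrencePoly]
  | one =>
    rw [zero_eq] at one_eq
    rw [recurrencePoly]
    linear_combination -one_eq
  | more n ih₀ ih₁ =>
    have recurrence := succ_eq (n + 1) n.succ_pos
    rw [Nat.add_sub_cancel] at recurrence
    rw [recurrencePoly, ← ih₀, ← ih₁]
    linear_combination -recurrence

/-- the first-kind associated polynomials `(P̂^{(1)}_n)` of the Geronimus
transformation `v̂` are orthogonal with respect to the Christoffel transformation
`(x-c)v^α` of the functional `v^α` whose SMOP is the co-recursive sequence `(S_n)`. -/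
theorem stmt_18 (v : ℕ → ℂ) (c : ℂ) (P : ℕ → Polynomial ℂ) (hP : IsSMOP v P)
    (a b : ℕ → ℂ) (hrec : HasTTRR P a b) (ha : ∀ n, 1 ≤ n → a n ≠ 0)
    (P1 : ℕ → Polynomial ℂ)
    (hP1 : HasTTRR P1 (fun n => a (n + 1)) (fun n => b (n + 1)))
    (vh : ℕ → ℂ) (hger : ∀ n, vh (n + 1) - c * vh n = v n) (hvh0 : vh 0 ≠ 0)
    (Ph : ℕ → Polynomial ℂ) (hPh : IsSMOP vh Ph)
    (ah bh : ℕ → ℂ) (hrech : HasTTRR Ph ah bh)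
    (Ph1 : ℕ → Polynomial ℂ)
    (hPh1 : HasTTRR Ph1 (fun n => ah (n + 1)) (fun n => bh (n + 1)))
    (S : ℕ → Polynomial ℂ)
    (hS : ∀ n, S n = P n + C (v 0 / vh 0) * P1prev P1 n)
    (vα : ℕ → ℂ) (hvα : IsSMOP vα S) :
    (∀ n m, n ≠ m → fapply (fun k => vα (k + 1) - c * vα k) (Ph1 n * Ph1 m) = 0)
    ∧ (∀ n, fapply (fun k => vα (k + 1) - c * vα k) (Ph1 n * Ph1 n) ≠ 0) := by
  obtain rfl := hrec.eq_recurrencePoly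
  obtain rfl := hP1.eq_recurrencePoly
  obtain rfl := hrech.eq_recurrencePoly
  obtain rfl := hPh1.eq_recurrencePoly
  rw [isSMOP_iff_isMonicOrthogonal] at hP hPh hvα
  have hv := momentFunctional.eq_christoffel hger
  have hα : v 0 / vh 0 * momentFunctional vh 1 = christoffel c (momentFunctional vh) 1 := by
    rw [← hv, momentFunctional.apply_one, momentFunctional.apply_one, div_mul_cancel₀ _ hvh0]
  have h := stmt_18_general (hv ▸ hP) hPh hα (fun n => hS (n + 1)) hvα
  rw [← momentFunctional.eq_christoffel fun _ => rfl, ← isSMOP_iff_isMonicOrthogonal] at h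
  exact h.2.2
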